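/- Assume ∇²Θ(p) is invertible at p = (μ, c, λ) ∈ Ω, and let h := H ∘ Φ⁻¹ on a neighborhood of Φ(p) where Φ is a diffeomorphism onto its image. Then the Hessian of h at Φ(p) satisfies ∇²h = −(1/k) 𝔸ᵀ (∇²Θ(p))⁻¹ 𝔸 − c 𝔹⁻¹, where k = k(p), M = M(p), and 𝔸 = 𝔸(k, M). -/

import Mathlib

open Matrix

noncomputable section

/-- The state space `ℝ × ℝ × ℝ^N` with coordinates `(μ, c, λ)`
(respectively `(k, α, M)`). -/
abbrev E (N : ℕ) : Type := ℝ × ℝ × (Fin N → ℝ)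

/-- Index type for `(N+2) × (N+2)` matrices in `1 + 1 + N` block form. -/
abbrev Idx (N : ℕ) : Type := Fin 1 ⊕ Fin 1 ⊕ Fin N

/-- The standard basis of `ℝ × ℝ × ℝ^N`. -/
def basisVec (N : ℕ) : Idx N → E N :=
  Sum.elim (fun _ => (1, 0, 0))
    (Sum.elim (fun _ => (0, 1, 0)) (fun i => (0, 0, Pi.single i 1)))

/-- The impulse `Q(M) = (1/2) M · B⁻¹ M`. -/
def Qimp (N : ℕ) (B : Matrix (Fin N) (Fin N) ℝ) (M : Fin N → ℝ) : ℝ :=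
  (1/2) * (M ⬝ᵥ B⁻¹.mulVec M)

/-- Partial derivative `∂_μΘ`. -/
def dmu (N : ℕ) (Θ : E N → ℝ) (p : E N) : ℝ := fderiv ℝ Θ p (1, 0, 0)

/-- Partial derivative `∂_cΘ`. -/
def dc (N : ℕ) (Θ : E N → ℝ) (p : E N) : ℝ := fderiv ℝ Θ p (0, 1, 0)

/-- Gradient `∇_λΘ` in the `λ` variables. -/
def gradlam (N : ℕ) (Θ : E N → ℝ) (p : E N) : Fin N → ℝ :=
  fun i => fderiv ℝ Θ p (0, 0, Pi.single i 1)

/-- Hessian matrix of a function on `ℝ × ℝ × ℝ^N` in the standard basis. -/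
def hessMat (N : ℕ) (Θ : E N → ℝ) (p : E N) : Matrix (Idx N) (Idx N) ℝ :=
  Matrix.of fun i j =>
    fderiv ℝ (fun q => fderiv ℝ Θ q (basisVec N j)) p (basisVec N i)

/-- The wavenumber `k = 1/∂_μΘ`. -/
def kfun (N : ℕ) (Θ : E N → ℝ) (p : E N) : ℝ := 1 / dmu N Θ p

/-- The mean value `M = ∇_λΘ/∂_μΘ`. -/
def Mfun (N : ℕ) (Θ : E N → ℝ) (p : E N) : Fin N → ℝ :=
  (dmu N Θ p)⁻¹ • gradlam N Θ p

/-- The variable `α = ∂_cΘ − ∂_μΘ · Q(∇_λΘ/∂_μΘ)`. -/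
def afun (N : ℕ) (B : Matrix (Fin N) (Fin N) ℝ) (Θ : E N → ℝ) (p : E N) : ℝ :=
  dc N Θ p - dmu N Θ p * Qimp N B (Mfun N Θ p)

/-- The map `Φ = (k, α, M)`. -/
def Phi (N : ℕ) (B : Matrix (Fin N) (Fin N) ℝ) (Θ : E N → ℝ) (p : E N) : E N :=
  (kfun N Θ p, afun N B Θ p, Mfun N Θ p)

/-- `Φ` is a local diffeomorphism at `p`: it is smooth and injective on an open
neighborhood of `p`, its image is open, and it admits a smooth local inverse. -/
def IsLocalDiffeoAt (N : ℕ) (Φ : E N → E N) (p : E N) : Prop :=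
  ∃ s : Set (E N), IsOpen s ∧ p ∈ s ∧ ContDiffOn ℝ (⊤ : ℕ∞) Φ s ∧ Set.InjOn Φ s ∧
    IsOpen (Φ '' s) ∧ ∃ Ψ : E N → E N, (∀ x ∈ s, Ψ (Φ x) = x) ∧
      ContDiffOn ℝ (⊤ : ℕ∞) Ψ (Φ '' s)

end

noncomputable section

open Matrix

/-- The averaged Hamiltonian `H = k (Θ − μ ∂_μΘ − c ∂_cΘ − λ·∇_λΘ)`. -/
def Hav (N : ℕ) (Θ : E N → ℝ) (p : E N) : ℝ :=
  kfun N Θ p * (Θ p - p.1 * dmu N Θ p - p.2.1 * dc N Θ p - p.2.2 ⬝ᵥ gradlam N Θ p)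

/-- The matrix `𝔹 = [[0,1,0],[1,0,0],[0,0,B]]` in `1+1+N` block form. -/
def BBmat (N : ℕ) (B : Matrix (Fin N) (Fin N) ℝ) : Matrix (Idx N) (Idx N) ℝ :=
  Matrix.of fun i j =>
    match i, j with
    | Sum.inl _, Sum.inr (Sum.inl _) => 1
    | Sum.inr (Sum.inl _), Sum.inl _ => 1
    | Sum.inr (Sum.inr a), Sum.inr (Sum.inr b) => B a b
    | _, _ => 0

/-- The matrix `𝔸(k,M) = [[−1/k,0,0],[−Q(M)/k, k, (B⁻¹M)ᵀ],[−M/k, 0, I_N]]`. -/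
def AAmat (N : ℕ) (B : Matrix (Fin N) (Fin N) ℝ) (k : ℝ) (M : Fin N → ℝ) :
    Matrix (Idx N) (Idx N) ℝ :=
  Matrix.of fun i j =>
    match i, j with
    | Sum.inl _, Sum.inl _ => -(1/k)
    | Sum.inl _, _ => 0
    | Sum.inr (Sum.inl _), Sum.inl _ => -(Qimp N B M / k)
    | Sum.inr (Sum.inl _), Sum.inr (Sum.inl _) => k
    | Sum.inr (Sum.inl _), Sum.inr (Sum.inr j') => B⁻¹.mulVec M j'
    | Sum.inr (Sum.inr i'), Sum.inl _ => -(M i' / k)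
    | Sum.inr (Sum.inr _), Sum.inr (Sum.inl _) => 0
    | Sum.inr (Sum.inr i'), Sum.inr (Sum.inr j') => if i' = j' then 1 else 0

end

/- In the coordinates `y = (k, α, M)` the covector `k ∇Θ` becomes the quadratic function
`F(y) = (1, ½ y · 𝔹⁻¹ y, M)`, and `h = k (Θ ∘ Ψ) − ⟨F, Ψ⟩` is a rescaled Legendre transform. Since
`F = k ∇Θ ∘ Ψ`, the derivative of `Ψ` drops out of `Dh = (Θ ∘ Ψ) dk − ⟨DF, Ψ⟩`, so one more
differentiation gives `D²h(u, v) = −⟨DF v − dk(v) ∇Θ, DΨ u⟩ − ⟨D²F(u, v), Ψ⟩`. Here `DF − ∇Θ ⊗ dk`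
has matrix `𝔸`, and `D²F` is `𝔹⁻¹` in the `c`-slot. Differentiating `F = k ∇Θ ∘ Ψ` gives
`𝔸 = k ∇²Θ DΨ`, which determines `DΨ`. -/

open Filter Topology

section ScaledLegendre

variable {𝕜 V W : Type*} [NontriviallyNormedField 𝕜] [NormedAddCommGroup V] [NormedSpace 𝕜 V]
  [NormedAddCommGroup W] [NormedSpace 𝕜 W]

/-- The function `κ · (Θ ∘ Ψ) − ⟨F, Ψ⟩`. When `F = κ • (DΘ ∘ Ψ)`, it is `−κ` times the Legendre
transform of `Θ` at the slope `F / κ`. -/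
def scaledLegendre (κ : W →L[𝕜] 𝕜) (Θ : V → 𝕜) (Ψ : W → V) (F : W → V →L[𝕜] 𝕜) (y : W) : 𝕜 :=
  κ y * Θ (Ψ y) - F y (Ψ y)

variable {κ : W →L[𝕜] 𝕜} {Θ : V → 𝕜} {Ψ : W → V} {F : W → V →L[𝕜] 𝕜}

theorem hasFDerivAt_scaledLegendre {F' : W →L[𝕜] V →L[𝕜] 𝕜} {y : W}
    (hΘ : DifferentiableAt 𝕜 Θ (Ψ y)) (hΨ : DifferentiableAt 𝕜 Ψ y) (hF : HasFDerivAt F F' y)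
    (hslope : F y = κ y • fderiv 𝕜 Θ (Ψ y)) :
    HasFDerivAt (scaledLegendre κ Θ Ψ F) (Θ (Ψ y) • κ - F'.flip (Ψ y)) y := by
  have hΘΨ := hΘ.hasFDerivAt.comp y hΨ.hasFDerivAt
  refine ((κ.hasFDerivAt.mul hΘΨ).sub (hF.clm_apply hΨ.hasFDerivAt)).congr_fderiv ?_
  ext v
  simp [hslope]

variable {F' : W → W →L[𝕜] V →L[𝕜] 𝕜} {F'' : W →L[𝕜] W →L[𝕜] V →L[𝕜] 𝕜} {q : W}

theorem fderiv_scaledLegendre_eventuallyEq (hΘ : ContDiffAt 𝕜 1 Θ (Ψ q))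
    (hΨ : ContDiffAt 𝕜 1 Ψ q) (hF : ∀ᶠ y in 𝓝 q, HasFDerivAt F (F' y) y)
    (hslope : ∀ᶠ y in 𝓝 q, F y = κ y • fderiv 𝕜 Θ (Ψ y)) :
    fderiv 𝕜 (scaledLegendre κ Θ Ψ F) =ᶠ[𝓝 q] fun y ↦ Θ (Ψ y) • κ - (F' y).flip (Ψ y) := by
  filter_upwards [hΨ.continuousAt.eventually (hΘ.eventually (by simp)),
    hΨ.eventually (by simp), hF, hslope] with y hΘy hΨy hFy hslopey
  exact (hasFDerivAt_scaledLegendre (hΘy.differentiableAt one_ne_zero)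
    (hΨy.differentiableAt one_ne_zero) hFy hslopey).fderiv

theorem fderiv_fderiv_scaledLegendre (hΘ : ContDiffAt 𝕜 1 Θ (Ψ q)) (hΨ : ContDiffAt 𝕜 1 Ψ q)
    (hF : ∀ᶠ y in 𝓝 q, HasFDerivAt F (F' y) y) (hF' : HasFDerivAt F' F'' q)
    (hslope : ∀ᶠ y in 𝓝 q, F y = κ y • fderiv 𝕜 Θ (Ψ y)) (u v : W) :
    fderiv 𝕜 (fun y ↦ fderiv 𝕜 (scaledLegendre κ Θ Ψ F) y v) q u =
      -(F' q v - κ v • fderiv 𝕜 Θ (Ψ q)) (fderiv 𝕜 Ψ q u) - F'' u v (Ψ q) := by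
  have hDv : (fun y ↦ fderiv 𝕜 (scaledLegendre κ Θ Ψ F) y v) =ᶠ[𝓝 q]
      fun y ↦ Θ (Ψ y) * κ v - F' y v (Ψ y) :=
    (fderiv_scaledLegendre_eventuallyEq hΘ hΨ hF hslope).mono fun y hy ↦ by simp [hy]
  have hΨq := (hΨ.differentiableAt one_ne_zero).hasFDerivAt
  have hΘΨ : HasFDerivAt (fun y ↦ Θ (Ψ y)) (fderiv 𝕜 Θ (Ψ q) ∘L fderiv 𝕜 Ψ q) q :=
    (hΘ.differentiableAt one_ne_zero).hasFDerivAt.comp q hΨq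
  have hF'v := (hF'.clm_apply (hasFDerivAt_const v q)).clm_apply hΨq
  rw [hDv.fderiv_eq, ((hΘΨ.mul_const (κ v)).fun_sub hF'v).fderiv]
  simp only [ContinuousLinearMap.comp_zero, zero_add, _root_.sub_apply, _root_.smul_apply,
    ContinuousLinearMap.comp_apply, smul_eq_mul, _root_.add_apply, ContinuousLinearMap.flip_apply,
    neg_sub]
  ring

theorem fderiv_slope_sub_eq_smul_hessian (hΘ : ContDiffAt 𝕜 2 Θ (Ψ q))
    (hΨ : DifferentiableAt 𝕜 Ψ q) {L : W →L[𝕜] V →L[𝕜] 𝕜} (hF : HasFDerivAt F L q)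
    (hslope : ∀ᶠ y in 𝓝 q, F y = κ y • fderiv 𝕜 Θ (Ψ y)) (v : W) :
    L v - κ v • fderiv 𝕜 Θ (Ψ q) =
      κ q • fderiv 𝕜 (fderiv 𝕜 Θ) (Ψ q) (fderiv 𝕜 Ψ q v) := by
  have hDΘ : HasFDerivAt (fderiv 𝕜 Θ) (fderiv 𝕜 (fderiv 𝕜 Θ) (Ψ q)) (Ψ q) :=
    ((hΘ.fderiv_right (m := 1) (by norm_num)).differentiableAt one_ne_zero).hasFDerivAt
  have hκDΘ := κ.hasFDerivAt.smul (hDΘ.comp q hΨ.hasFDerivAt)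
  rw [hF.unique (hκDΘ.congr_of_eventuallyEq hslope)]
  simp

theorem hessian_scaledLegendre {ι ι' : Type*} [Fintype ι] [DecidableEq ι] (b : Module.Basis ι 𝕜 V)
    (w : ι' → W) (hΘ : ContDiffAt 𝕜 2 Θ (Ψ q)) (hΨ : ContDiffAt 𝕜 1 Ψ q)
    (hF : ∀ᶠ y in 𝓝 q, HasFDerivAt F (F' y) y) (hF' : HasFDerivAt F' F'' q)
    (hslope : ∀ᶠ y in 𝓝 q, F y = κ y • fderiv 𝕜 Θ (Ψ y)) (hκ : κ q ≠ 0)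
    {H : Matrix ι ι 𝕜} (hH : ∀ i j, H i j = fderiv 𝕜 (fderiv 𝕜 Θ) (Ψ q) (b i) (b j))
    (hHdet : IsUnit H.det)
    {A : Matrix ι ι' 𝕜} (hA : ∀ i j, A i j = (F' q (w j) - κ (w j) • fderiv 𝕜 Θ (Ψ q)) (b i)) :
    Matrix.of (fun i j ↦ fderiv 𝕜 (fun y ↦ fderiv 𝕜 (scaledLegendre κ Θ Ψ F) y (w j)) q (w i)) =
      -(κ q)⁻¹ • (Aᵀ * H⁻¹ * A) - Matrix.of fun i j ↦ F'' (w i) (w j) (Ψ q) := by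
  set J : Matrix ι' ι 𝕜 := Matrix.of fun i m ↦ b.repr (fderiv 𝕜 Ψ q (w i)) m
  have map_eq_sum (f : V →L[𝕜] 𝕜) (i : ι') : f (fderiv 𝕜 Ψ q (w i)) = ∑ m, J i m * f (b m) := by
    rw [← congrArg f (b.sum_repr (fderiv 𝕜 Ψ q (w i)))]
    simp only [map_sum, map_smul, smul_eq_mul, J, Matrix.of_apply]
  have hJH : Aᵀ = κ q • (J * H) := by
    ext i j
    have hij := map_eq_sum ((fderiv 𝕜 (fderiv 𝕜 Θ) (Ψ q)).flip (b j)) i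
    rw [Matrix.transpose_apply, hA, fderiv_slope_sub_eq_smul_hessian hΘ
      (hΨ.differentiableAt one_ne_zero) hF.self_of_nhds hslope]
    simpa only [_root_.smul_apply, Matrix.smul_apply, Matrix.mul_apply, hH,
      ContinuousLinearMap.flip_apply] using congrArg (κ q • ·) hij
  have hJ_eq : J = (κ q)⁻¹ • (Aᵀ * H⁻¹) := by
    rw [hJH, Matrix.smul_mul, Matrix.mul_nonsing_inv_cancel_right _ _ hHdet, inv_smul_smul₀ hκ]
  have hhess : Matrix.of (fun i j ↦
      fderiv 𝕜 (fun y ↦ fderiv 𝕜 (scaledLegendre κ Θ Ψ F) y (w j)) q (w i)) =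
      -(J * A) - Matrix.of fun i j ↦ F'' (w i) (w j) (Ψ q) := by
    ext i j
    simp only [Matrix.of_apply, Matrix.sub_apply, Matrix.neg_apply, Matrix.mul_apply, hA]
    rw [fderiv_fderiv_scaledLegendre (hΘ.of_le (by norm_num)) hΨ hF hF' hslope, map_eq_sum]
  rw [hhess, hJ_eq, Matrix.smul_mul, neg_smul]

end ScaledLegendre

section ScaledGradient

variable {N : ℕ} {B : Matrix (Fin N) (Fin N) ℝ} {Θ : E N → ℝ}

/-- `basisVec` as a basis of `ℝ × ℝ × ℝ^N`. -/
noncomputable def coordBasis (N : ℕ) : Module.Basis (Idx N) ℝ (E N) :=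
  (Module.Basis.singleton (Fin 1) ℝ).prod
    ((Module.Basis.singleton (Fin 1) ℝ).prod (Pi.basisFun ℝ (Fin N)))

theorem coordBasis_apply (i : Idx N) : coordBasis N i = basisVec N i := by
  rcases i with i | i | i <;> simp [coordBasis, basisVec, Prod.zero_eq_mk]

/-- The pairing `(x, y) ↦ x_λ · y_λ` of the `ℝ^N` components. -/
noncomputable def lamPairing (N : ℕ) : E N →L[ℝ] E N →L[ℝ] ℝ :=
  let lam : E N →ₗ[ℝ] Fin N → ℝ := LinearMap.snd ℝ ℝ _ ∘ₗ LinearMap.snd ℝ ℝ _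
  ((dotProductBilin ℝ ℝ).compl₁₂ lam lam).toContinuousBilinearMap

theorem lamPairing_apply (x y : E N) : lamPairing N x y = x.2.2 ⬝ᵥ y.2.2 := rfl

/-- The bilinear form `(x, y) ↦ x · 𝔹⁻¹ y`, with the blocks of `𝔹⁻¹` written out. -/
noncomputable def BBinvForm (N : ℕ) (B : Matrix (Fin N) (Fin N) ℝ) : E N →L[ℝ] E N →L[ℝ] ℝ :=
  (LinearMap.mk₂ ℝ
    (fun x y : E N ↦ x.1 * y.2.1 + x.2.1 * y.1 + x.2.2 ⬝ᵥ B⁻¹ *ᵥ y.2.2)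
    (fun x x' y ↦ by simp only [Prod.fst_add, Prod.snd_add, add_dotProduct]; ring)
    (fun c x y ↦ by simp only [Prod.smul_fst, Prod.smul_snd, smul_eq_mul, smul_dotProduct]; ring)
    (fun x y y' ↦ by simp only [Prod.fst_add, Prod.snd_add, mulVec_add, dotProduct_add]; ring)
    (fun c x y ↦ by
      simp only [Prod.smul_fst, Prod.smul_snd, smul_eq_mul, mulVec_smul, dotProduct_smul]
      ring)).toContinuousBilinearMap

theorem BBinvForm_apply (x y : E N) :
    BBinvForm N B x y = x.1 * y.2.1 + x.2.1 * y.1 + x.2.2 ⬝ᵥ B⁻¹ *ᵥ y.2.2 := rfl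

theorem BBinvForm_comm (hB : B.IsSymm) (x y : E N) : BBinvForm N B x y = BBinvForm N B y x := by
  have hBinv : (B⁻¹)ᵀ = B⁻¹ := by rw [transpose_nonsing_inv, hB.eq]
  have hdot : x.2.2 ⬝ᵥ B⁻¹ *ᵥ y.2.2 = y.2.2 ⬝ᵥ B⁻¹ *ᵥ x.2.2 := by
    rw [dotProduct_mulVec, ← mulVec_transpose, hBinv, dotProduct_comm]
  rw [BBinvForm_apply, BBinvForm_apply, hdot]
  ring

theorem BBmat_inv (hB : IsUnit B.det) : (BBmat N B)⁻¹ = BBmat N B⁻¹ := by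
  refine inv_eq_right_inv ?_
  ext i j
  have hBB (i j : Fin N) : ∑ m, B i m * B⁻¹ m j = (1 : Matrix (Fin N) (Fin N) ℝ) i j := by
    rw [← mul_apply, mul_nonsing_inv B hB]
  rcases i with i | i | i <;> rcases j with j | j | j <;>
    simp [mul_apply, BBmat, one_apply, hBB, eq_iff_true_of_subsingleton]

/-- The covector `k ∇Θ` as a function of `y = (k, α, M)`; in coordinates it is
`(1, k α + Q(M), M)`, and `k α + Q(M) = ½ y · 𝔹⁻¹ y`. -/
noncomputable def scaledGrad (N : ℕ) (B : Matrix (Fin N) (Fin N) ℝ) (y : E N) : E N →L[ℝ] ℝ :=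
  .fst ℝ ℝ _ + lamPairing N y + (1 / 2 * BBinvForm N B y y) • (.fst ℝ ℝ _ ∘L .snd ℝ ℝ _)

theorem scaledGrad_apply (y x : E N) :
    scaledGrad N B y x = x.1 + (y.1 * y.2.1 + Qimp N B y.2.2) * x.2.1 + y.2.2 ⬝ᵥ x.2.2 := by
  simp only [scaledGrad, BBinvForm_apply, _root_.add_apply, ContinuousLinearMap.coe_fst',
    lamPairing_apply, _root_.smul_apply, ContinuousLinearMap.comp_apply,
    ContinuousLinearMap.coe_snd', smul_eq_mul, Qimp]
  ring

/-- The trilinear form `(u, v, x) ↦ (u · 𝔹⁻¹ v) x_c`, with `x_c` the `c`-coordinate of `x`; it is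
the second derivative of `scaledGrad` when `B` is symmetric. -/
noncomputable def BBinvFormSMul (N : ℕ) (B : Matrix (Fin N) (Fin N) ℝ) :
    E N →L[ℝ] E N →L[ℝ] E N →L[ℝ] ℝ :=
  (ContinuousLinearMap.smulRightL ℝ (E N) (E N →L[ℝ] ℝ)).flip (.fst ℝ ℝ _ ∘L .snd ℝ ℝ _) ∘L
    BBinvForm N B

theorem BBinvFormSMul_apply (u v x : E N) :
    BBinvFormSMul N B u v x = BBinvForm N B u v * x.2.1 := rfl

theorem of_BBinvFormSMul_basisVec (hB : IsUnit B.det) (x : E N) :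
    Matrix.of (fun i j ↦ BBinvFormSMul N B (basisVec N i) (basisVec N j) x) =
      x.2.1 • (BBmat N B)⁻¹ := by
  rw [BBmat_inv hB]
  ext i j
  rcases i with i | i | i <;> rcases j with j | j | j <;>
    simp [BBinvFormSMul_apply, BBinvForm_apply, basisVec, BBmat, mul_comm]

theorem hasFDerivAt_scaledGrad (hB : B.IsSymm) (y : E N) :
    HasFDerivAt (scaledGrad N B) (lamPairing N + BBinvFormSMul N B y) y := by
  have hquad := ((BBinvForm N B).hasFDerivAt.clm_apply (hasFDerivAt_id y)).const_mul (1 / 2)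
  refine (((lamPairing N).hasFDerivAt.const_add _).add (hquad.smul_const _)).congr_fderiv ?_
  refine ContinuousLinearMap.ext fun u ↦ ContinuousLinearMap.ext fun x ↦ ?_
  simp [BBinvFormSMul_apply, BBinvForm_comm hB u y, ← two_mul]

theorem fderiv_apply_eq_partials (x v : E N) :
    fderiv ℝ Θ x v = v.1 * dmu N Θ x + v.2.1 * dc N Θ x + v.2.2 ⬝ᵥ gradlam N Θ x := by
  have hsum := congrArg (fderiv ℝ Θ x) ((coordBasis N).sum_repr v).symm
  simp only [map_sum, map_smul, coordBasis_apply] at hsum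
  rw [hsum]
  simp [Fintype.sum_sum_type, coordBasis, basisVec, dmu, dc, gradlam, dotProduct, add_assoc]

theorem scaledGrad_Phi {x : E N} (hμ : dmu N Θ x ≠ 0) :
    scaledGrad N B (Phi N B Θ x) = kfun N Θ x • fderiv ℝ Θ x := by
  refine ContinuousLinearMap.ext fun v ↦ ?_
  have hM : Mfun N Θ x = kfun N Θ x • gradlam N Θ x := by simp [Mfun, kfun]
  have hkμ : kfun N Θ x * dmu N Θ x = 1 := one_div_mul_cancel hμ
  simp only [scaledGrad_apply, Phi, afun, _root_.smul_apply, fderiv_apply_eq_partials, smul_eq_mul]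
  rw [dotProduct_comm v.2.2, hM, smul_dotProduct, smul_eq_mul]
  linear_combination -(v.1 + Qimp N B (kfun N Θ x • gradlam N Θ x) * v.2.1) * hkμ

theorem Hav_eq_kfun_mul (x : E N) : Hav N Θ x = kfun N Θ x * (Θ x - fderiv ℝ Θ x x) := by
  rw [Hav, fderiv_apply_eq_partials]
  ring

theorem AAmat_apply (hB : B.IsSymm) {y : E N} (hy : y.1 ≠ 0) (i j : Idx N) :
    AAmat N B y.1 y.2.2 i j =
      ((lamPairing N + BBinvFormSMul N B y) (basisVec N j) -
        (basisVec N j).1 • y.1⁻¹ • scaledGrad N B y) (basisVec N i) := by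
  simp only [_root_.sub_apply, _root_.add_apply, _root_.smul_apply, lamPairing_apply,
    BBinvFormSMul_apply, BBinvForm_comm hB y (basisVec N j), BBinvForm_apply, scaledGrad_apply]
  rcases i with i | i | i <;> rcases j with j | j | j <;>
    simp only [AAmat, of_apply, basisVec, Sum.elim_inl, Sum.elim_inr, dotProduct_zero,
      zero_dotProduct, dotProduct_single, single_dotProduct, Pi.single_apply, Pi.zero_apply,
      smul_eq_mul] <;>
    field_simp <;> ring

theorem hessMat_apply {f : E N → ℝ} {x : E N} (hf : ContDiffAt ℝ 2 f x) (i j : Idx N) :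
    hessMat N f x i j = fderiv ℝ (fderiv ℝ f) x (basisVec N i) (basisVec N j) := by
  have hDf : DifferentiableAt ℝ (fderiv ℝ f) x :=
    (hf.fderiv_right (m := 1) (by norm_num)).differentiableAt one_ne_zero
  rw [hessMat, of_apply, fderiv_clm_apply hDf (differentiableAt_const _)]
  simp

theorem hessMat_congr {f g : E N → ℝ} {x : E N} (h : f =ᶠ[𝓝 x] g) :
    hessMat N f x = hessMat N g x := by
  ext i j
  have hj : (fun y ↦ fderiv ℝ f y (basisVec N j)) =ᶠ[𝓝 x] fun y ↦ fderiv ℝ g y (basisVec N j) :=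
    h.fderiv.mono fun y hy ↦ DFunLike.congr_fun hy (basisVec N j)
  rw [hessMat, hessMat, of_apply, of_apply, hj.fderiv_eq]

theorem hessMat_scaledLegendre (hBsymm : B.IsSymm) (hBinv : IsUnit B.det) {Ψ : E N → E N}
    {q : E N} (hΘ : ContDiffAt ℝ 2 Θ (Ψ q)) (hΨ : ContDiffAt ℝ 1 Ψ q)
    (hslope : ∀ᶠ y in 𝓝 q, scaledGrad N B y = y.1 • fderiv ℝ Θ (Ψ y)) (hk : q.1 ≠ 0)
    (hhess : IsUnit (hessMat N Θ (Ψ q)).det) :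
    hessMat N (scaledLegendre (.fst ℝ ℝ _) Θ Ψ (scaledGrad N B)) q =
      -q.1⁻¹ • ((AAmat N B q.1 q.2.2)ᵀ * (hessMat N Θ (Ψ q))⁻¹ * AAmat N B q.1 q.2.2)
        - (Ψ q).2.1 • (BBmat N B)⁻¹ := by
  have hH (i j : Idx N) : hessMat N Θ (Ψ q) i j =
      fderiv ℝ (fderiv ℝ Θ) (Ψ q) (coordBasis N i) (coordBasis N j) := by
    rw [hessMat_apply hΘ, coordBasis_apply, coordBasis_apply]
  have hA (i j : Idx N) : AAmat N B q.1 q.2.2 i j = ((lamPairing N + BBinvFormSMul N B q)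
      (basisVec N j) - (basisVec N j).1 • fderiv ℝ Θ (Ψ q)) (coordBasis N i) := by
    rw [AAmat_apply hBsymm hk, hslope.self_of_nhds, inv_smul_smul₀ hk, coordBasis_apply]
  have hF : ∀ᶠ y in 𝓝 q,
      HasFDerivAt (scaledGrad N B) (lamPairing N + BBinvFormSMul N B y) y :=
    .of_forall (hasFDerivAt_scaledGrad hBsymm)
  have hF' : HasFDerivAt (fun y ↦ lamPairing N + BBinvFormSMul N B y) (BBinvFormSMul N B) q :=
    .const_add (𝕜 := ℝ) (E := E N) (F := E N →L[ℝ] E N →L[ℝ] ℝ) _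
      (ContinuousLinearMap.hasFDerivAt _)
  rw [← of_BBinvFormSMul_basisVec hBinv]
  exact hessian_scaledLegendre (coordBasis N) (basisVec N) hΘ hΨ hF hF' hslope hk hH hhess hA

end ScaledGradient

section LocalInverse

variable {N : ℕ} {B : Matrix (Fin N) (Fin N) ℝ} {Θ : E N → ℝ} {Ψ : E N → E N} {q : E N}

theorem eventually_scaledGrad_eq_smul_fderiv (hk : q.1 ≠ 0)
    (hΦΨ : ∀ᶠ y in 𝓝 q, Phi N B Θ (Ψ y) = y) :
    ∀ᶠ y in 𝓝 q, scaledGrad N B y = y.1 • fderiv ℝ Θ (Ψ y) := by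
  filter_upwards [hΦΨ, continuousAt_fst.eventually_ne hk] with y hy hy0
  have hky : kfun N Θ (Ψ y) = y.1 := congrArg Prod.fst hy
  have hμy : dmu N Θ (Ψ y) ≠ 0 := by
    intro h0
    simp [← hky, kfun, h0] at hy0
  rw [← hky, ← scaledGrad_Phi hμy, hy]

theorem Hav_comp_eventuallyEq (hk : q.1 ≠ 0) (hΦΨ : ∀ᶠ y in 𝓝 q, Phi N B Θ (Ψ y) = y) :
    Hav N Θ ∘ Ψ =ᶠ[𝓝 q] scaledLegendre (.fst ℝ ℝ _) Θ Ψ (scaledGrad N B) := by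
  filter_upwards [hΦΨ, eventually_scaledGrad_eq_smul_fderiv hk hΦΨ] with y hy hslope
  have hky : kfun N Θ (Ψ y) = y.1 := congrArg Prod.fst hy
  simp [Hav_eq_kfun_mul, hky, scaledLegendre, hslope, mul_sub]

end LocalInverse

theorem stmt9_general {N : ℕ} {B : Matrix (Fin N) (Fin N) ℝ} (hBsymm : B.IsSymm)
    (hBinv : IsUnit B.det) {Θ : E N → ℝ} {Ψ : E N → E N} {p : E N} (hΘ : ContDiffAt ℝ 2 Θ p)
    (hμ : dmu N Θ p ≠ 0) (hhess : IsUnit (hessMat N Θ p).det)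
    (hΨ : ContDiffAt ℝ 1 Ψ (Phi N B Θ p)) (hΨp : Ψ (Phi N B Θ p) = p)
    (hΦΨ : ∀ᶠ y in 𝓝 (Phi N B Θ p), Phi N B Θ (Ψ y) = y) :
    hessMat N (Hav N Θ ∘ Ψ) (Phi N B Θ p) =
      (-(1 / kfun N Θ p)) •
          ((AAmat N B (kfun N Θ p) (Mfun N Θ p))ᵀ * (hessMat N Θ p)⁻¹ *
            AAmat N B (kfun N Θ p) (Mfun N Θ p))
        - p.2.1 • (BBmat N B)⁻¹ := by
  have hk : (Phi N B Θ p).1 ≠ 0 := one_div_ne_zero hμ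
  have hess := hessMat_scaledLegendre hBsymm hBinv (by rwa [hΨp]) hΨ
    (eventually_scaledGrad_eq_smul_fderiv hk hΦΨ) hk (by rwa [hΨp])
  rw [hessMat_congr (Hav_comp_eventuallyEq hk hΦΨ), one_div, hess, hΨp]
  rfl

open Matrix in
/-- if `∇²Θ(p)` is invertible, the Hessian of `h = H ∘ Φ⁻¹` at `Φ(p)`
(for any smooth local inverse `Ψ` of `Φ` near `p`) satisfies
`∇²h = −(1/k) 𝔸ᵀ (∇²Θ(p))⁻¹ 𝔸 − c 𝔹⁻¹` with `𝔸 = 𝔸(k(p), M(p))`. -/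
theorem stmt9 (N : ℕ) (hN : 1 ≤ N) (B : Matrix (Fin N) (Fin N) ℝ)
    (hBsymm : B.IsSymm) (hBinv : IsUnit B.det)
    (Ω : Set (E N)) (hΩ : IsOpen Ω)
    (Θ : E N → ℝ) (hΘ : ContDiffOn ℝ (⊤ : ℕ∞) Θ Ω)
    (hμpos : ∀ p ∈ Ω, 0 < dmu N Θ p)
    (p : E N) (hp : p ∈ Ω) (hhess : IsUnit (hessMat N Θ p).det) :
    ∀ s : Set (E N), ∀ Ψ : E N → E N,
      IsOpen s → p ∈ s → s ⊆ Ω →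
      (∀ x ∈ s, Ψ (Phi N B Θ x) = x) →
      IsOpen (Phi N B Θ '' s) →
      ContDiffOn ℝ (⊤ : ℕ∞) Ψ (Phi N B Θ '' s) →
      hessMat N (Hav N Θ ∘ Ψ) (Phi N B Θ p)
        = (-(1 / kfun N Θ p)) •
            ((AAmat N B (kfun N Θ p) (Mfun N Θ p))ᵀ * (hessMat N Θ p)⁻¹ *
              AAmat N B (kfun N Θ p) (Mfun N Θ p))
          - p.2.1 • (BBmat N B)⁻¹ := by
  intro s Ψ _ hps _ hinv hU hΨ
  have hUp : Phi N B Θ '' s ∈ 𝓝 (Phi N B Θ p) := hU.mem_nhds ⟨p, hps, rfl⟩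
  have hΦΨ : Set.LeftInvOn (Phi N B Θ) Ψ (Phi N B Θ '' s) :=
    Set.LeftInvOn.rightInvOn_image hinv
  exact stmt9_general hBsymm hBinv ((hΘ.contDiffAt (hΩ.mem_nhds hp)).of_le (by norm_cast))
    (hμpos p hp).ne' hhess ((hΨ.contDiffAt hUp).of_le (by norm_cast)) (hinv p hps)
    (Filter.eventually_of_mem hUp hΦΨ)
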